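/- Under the stated hypotheses on G, if n ≥ 10 then the graph F obtained from G by deleting the edge v_1v_{n−1} and adding the edge v_0v_k satisfies q(F) > q(G). -/

import Mathlib

open Matrix

/-- The signless Laplacian `Q(G) = D(G) + A(G)` of a finite simple graph `G`. -/
noncomputable def signlessLaplacian {V : Type*} [Fintype V] (G : SimpleGraph V) :
    Matrix V V ℝ :=
  letI := Classical.decEq V
  letI : DecidableRel G.Adj := Classical.decRel _
  Matrix.diagonal (fun v => (G.degree v : ℝ)) + G.adjMatrix ℝ

/-- The `Q`-index of `G`: the largest eigenvalue of the signless Laplacian `Q(G)`. -/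
noncomputable def qIndex {V : Type*} [Fintype V] (G : SimpleGraph V) : ℝ :=
  letI := Classical.decEq V
  sSup (spectrum ℝ (signlessLaplacian G))

/-!
Let `x` be a positive eigenvector of `Q(G)` for `q = q(G)`. Since `xᵀ Q x` is the sum of
`(x u + x v) ^ 2` over the edges `uv`, switching the edge `ab` to `ok` raises the Rayleigh quotient
of `x` as soon as `x a + x b < x o + x k`. The closed neighbourhood of `k` contains that of every
vertex outside `o` and its neighbours, so `x` is at most `x k` there. The eigenvalue equations at
`a` and `b`, which have degree at most `4`, then give `(q - 5) (x a + x b) ≤ 2 (x o) + 4 (x k)`,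
and `q ≥ d(k) + 1 ≥ 9` makes the factor `q - 5` at least `4`.
-/

section SymmetricMatrix

variable {ι : Type*} [Fintype ι] {A : Matrix ι ι ℝ}

theorem dotProduct_mulVec_le_abs (hA : ∀ i j, 0 ≤ A i j) (x : ι → ℝ) :
    x ⬝ᵥ (A *ᵥ x) ≤ |x| ⬝ᵥ (A *ᵥ |x|) := by
  simp only [dotProduct, mulVec, Finset.mul_sum, Pi.abs_apply]
  refine Finset.sum_le_sum fun i _ ↦ Finset.sum_le_sum fun j _ ↦ ?_
  calc x i * (A i j * x j) ≤ |x i * (A i j * x j)| := le_abs_self _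
    _ = |x i| * (A i j * |x j|) := by rw [abs_mul, abs_mul, abs_of_nonneg (hA i j)]

variable [DecidableEq ι]

theorem posSemidef_sSup_spectrum_smul_one_sub (hA : A.IsHermitian) :
    (sSup (spectrum ℝ A) • (1 : Matrix ι ι ℝ) - A).PosSemidef := by
  open scoped MatrixOrder in
  rw [← Algebra.algebraMap_eq_smul_one, ← Matrix.le_iff, le_algebraMap_iff_spectrum_le hA]
  exact fun μ hμ ↦ le_csSup A.finite_real_spectrum.bddAbove hμ

theorem dotProduct_smul_one_sub_mulVec (c : ℝ) (A : Matrix ι ι ℝ) (x : ι → ℝ) :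
    x ⬝ᵥ ((c • (1 : Matrix ι ι ℝ) - A) *ᵥ x) = c * (x ⬝ᵥ x) - x ⬝ᵥ (A *ᵥ x) := by
  rw [sub_mulVec, smul_mulVec, one_mulVec, dotProduct_sub, dotProduct_smul, smul_eq_mul]

theorem dotProduct_mulVec_le_sSup_spectrum_mul (hA : A.IsHermitian) (x : ι → ℝ) :
    x ⬝ᵥ (A *ᵥ x) ≤ sSup (spectrum ℝ A) * (x ⬝ᵥ x) := by
  have h := (posSemidef_sSup_spectrum_smul_one_sub hA).dotProduct_mulVec_nonneg x
  rwa [star_trivial, dotProduct_smul_one_sub_mulVec, sub_nonneg] at h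

theorem mulVec_eq_sSup_spectrum_smul_of_le (hA : A.IsHermitian) {x : ι → ℝ}
    (hx : sSup (spectrum ℝ A) * (x ⬝ᵥ x) ≤ x ⬝ᵥ (A *ᵥ x)) :
    A *ᵥ x = sSup (spectrum ℝ A) • x := by
  have h := ((posSemidef_sSup_spectrum_smul_one_sub hA).dotProduct_mulVec_zero_iff x).1 <| by
    rw [star_trivial, dotProduct_smul_one_sub_mulVec, sub_eq_zero]
    exact hx.antisymm (dotProduct_mulVec_le_sSup_spectrum_mul hA x)
  rw [sub_mulVec, smul_mulVec, one_mulVec, sub_eq_zero] at h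
  exact h.symm

theorem exists_mulVec_eq_sSup_spectrum_smul [Nonempty ι] (hA : A.IsHermitian) :
    ∃ x : ι → ℝ, x ≠ 0 ∧ A *ᵥ x = sSup (spectrum ℝ A) • x := by
  have hmem : sSup (spectrum ℝ A) ∈ spectrum ℝ A :=
    Set.Nonempty.csSup_mem ⟨_, hA.eigenvalues_mem_spectrum_real (Classical.arbitrary ι)⟩
      A.finite_real_spectrum
  obtain ⟨j, hj⟩ : sSup (spectrum ℝ A) ∈ Set.range hA.eigenvalues := by
    rwa [← hA.spectrum_real_eq_range_eigenvalues]
  refine ⟨hA.eigenvectorBasis j, ?_, hj ▸ hA.mulVec_eigenvectorBasis j⟩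
  exact fun h ↦ hA.eigenvectorBasis.toBasis.ne_zero j (by ext i; simpa using congrFun h i)

theorem exists_nonneg_mulVec_eq_sSup_spectrum_smul [Nonempty ι] (hA : A.IsHermitian)
    (hA0 : ∀ i j, 0 ≤ A i j) :
    ∃ x : ι → ℝ, x ≠ 0 ∧ 0 ≤ x ∧ A *ᵥ x = sSup (spectrum ℝ A) • x := by
  obtain ⟨x, hx0, hx⟩ := exists_mulVec_eq_sSup_spectrum_smul hA
  refine ⟨|x|, fun h ↦ hx0 ?_, abs_nonneg x, mulVec_eq_sSup_spectrum_smul_of_le hA ?_⟩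
  · exact funext fun i ↦ abs_eq_zero.1 (congrFun h i)
  calc sSup (spectrum ℝ A) * (|x| ⬝ᵥ |x|) = x ⬝ᵥ (A *ᵥ x) := by
        have habs : |x| ⬝ᵥ |x| = x ⬝ᵥ x := by simp [dotProduct]
        rw [habs, hx, dotProduct_smul, smul_eq_mul]
    _ ≤ |x| ⬝ᵥ (A *ᵥ |x|) := dotProduct_mulVec_le_abs hA0 x

theorem le_sSup_spectrum_of_smul_le_mulVec (hA : A.IsHermitian) {c : ℝ} {y : ι → ℝ} (hy0 : y ≠ 0)
    (hy : 0 ≤ y) (hc : c • y ≤ A *ᵥ y) : c ≤ sSup (spectrum ℝ A) := by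
  have hyy : 0 < y ⬝ᵥ y :=
    (Finset.sum_nonneg fun i _ ↦ mul_self_nonneg (y i)).lt_of_ne'
      (dotProduct_self_eq_zero.not.2 hy0)
  refine le_of_mul_le_mul_right ?_ hyy
  calc c * (y ⬝ᵥ y) = y ⬝ᵥ (c • y) := by rw [dotProduct_smul, smul_eq_mul]
    _ ≤ y ⬝ᵥ (A *ᵥ y) := dotProduct_le_dotProduct_of_nonneg_left hc hy
    _ ≤ sSup (spectrum ℝ A) * (y ⬝ᵥ y) := dotProduct_mulVec_le_sSup_spectrum_mul hA y

end SymmetricMatrix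

section SignlessLaplacian

variable {V : Type*} [Fintype V] (G : SimpleGraph V)

theorem qIndex_eq_sSup_spectrum [DecidableEq V] :
    qIndex G = sSup (spectrum ℝ (signlessLaplacian G)) := by
  unfold qIndex
  congr!

theorem signlessLaplacian_eq [DecidableEq V] [DecidableRel G.Adj] :
    signlessLaplacian G = diagonal (fun v ↦ (G.degree v : ℝ)) + G.adjMatrix ℝ := by
  unfold signlessLaplacian
  congr!

theorem signlessLaplacian_eq_incMatrix_mul_transpose [DecidableEq V] [DecidableRel G.Adj] :
    signlessLaplacian G = G.incMatrix ℝ * (G.incMatrix ℝ)ᵀ := by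
  ext i j
  rw [G.incMatrix_mul_transpose, signlessLaplacian_eq, Matrix.add_apply, diagonal_apply,
    SimpleGraph.adjMatrix_apply]
  obtain rfl | hij := eq_or_ne i j <;> simp [*]

theorem isHermitian_signlessLaplacian : (signlessLaplacian G).IsHermitian := by
  classical
  rw [signlessLaplacian_eq_incMatrix_mul_transpose, ← conjTranspose_eq_transpose_of_trivial]
  exact isHermitian_mul_conjTranspose_self _

theorem signlessLaplacian_nonneg (i j : V) : 0 ≤ signlessLaplacian G i j := by
  classical
  rw [signlessLaplacian_eq, Matrix.add_apply, diagonal_apply, SimpleGraph.adjMatrix_apply]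
  positivity

theorem signlessLaplacian_mulVec_apply [DecidableRel G.Adj] (x : V → ℝ) (i : V) :
    (signlessLaplacian G *ᵥ x) i = G.degree i * x i + ∑ j ∈ G.neighborFinset i, x j := by
  classical
  rw [signlessLaplacian_eq, add_mulVec, Pi.add_apply, mulVec_diagonal,
    SimpleGraph.adjMatrix_mulVec_apply]

theorem vecMul_incMatrix_apply [DecidableEq V] [DecidableRel G.Adj] (x : V → ℝ) (e : Sym2 V) :
    (x ᵥ* G.incMatrix ℝ) e = if e ∈ G.edgeFinset then ∑ v ∈ e.toFinset, x v else 0 := by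
  by_cases he : e ∈ G.edgeFinset
  · have hmem (v : V) : e ∈ G.incidenceSet v ↔ v ∈ e.toFinset := by
      simp [SimpleGraph.incidenceSet, SimpleGraph.mem_edgeFinset.1 he]
    simp [vecMul, dotProduct, SimpleGraph.incMatrix_apply', hmem, he,
      -Sym2.mem_toFinset]
  · have hnotMem (v : V) : e ∉ G.incidenceSet v :=
      fun h ↦ he (SimpleGraph.mem_edgeFinset.2 h.1)
    simp [vecMul, dotProduct, SimpleGraph.incMatrix_apply', hnotMem, he]

theorem dotProduct_signlessLaplacian_mulVec [DecidableEq V] [Fintype G.edgeSet] (x : V → ℝ) :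
    x ⬝ᵥ (signlessLaplacian G *ᵥ x) = ∑ e ∈ G.edgeFinset, (∑ v ∈ e.toFinset, x v) ^ 2 := by
  classical
  calc x ⬝ᵥ (signlessLaplacian G *ᵥ x)
      = (x ᵥ* G.incMatrix ℝ) ⬝ᵥ (x ᵥ* G.incMatrix ℝ) := by
        rw [signlessLaplacian_eq_incMatrix_mul_transpose, ← mulVec_mulVec, dotProduct_mulVec,
          mulVec_transpose]
    _ = ∑ e ∈ G.edgeFinset, (∑ v ∈ e.toFinset, x v) ^ 2 := by
        simp only [dotProduct, vecMul_incMatrix_apply, ← sq, ite_pow, ne_eq, OfNat.ofNat_ne_zero,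
          not_false_eq_true, zero_pow, Finset.sum_ite_mem, Finset.univ_inter]
        congr!

variable {G}

theorem dotProduct_signlessLaplacian_mulVec_le_qIndex_mul (x : V → ℝ) :
    x ⬝ᵥ (signlessLaplacian G *ᵥ x) ≤ qIndex G * (x ⬝ᵥ x) := by
  classical
  rw [qIndex_eq_sSup_spectrum]
  exact dotProduct_mulVec_le_sSup_spectrum_mul (isHermitian_signlessLaplacian G) x

theorem degree_add_one_le_qIndex [DecidableRel G.Adj] {v : V} (hv : 0 < G.degree v) :
    G.degree v + 1 ≤ qIndex G := by
  classical
  have hv' : (0 : ℝ) < G.degree v := by exact_mod_cast hv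
  -- The top eigenvector of the star formed by `v` and its neighbours.
  let y : V → ℝ := fun u ↦ if u = v then G.degree v else if G.Adj v u then 1 else 0
  have hyv : y v = G.degree v := if_pos rfl
  have hy_adj {u : V} (hu : G.Adj v u) : y u = 1 := by simp [y, hu, hu.ne']
  have hy : 0 ≤ y := fun u ↦ by dsimp only [y]; split_ifs <;> simp
  have hy0 : y ≠ 0 := fun h ↦ hv'.ne' (hyv ▸ congrFun h v)
  rw [qIndex_eq_sSup_spectrum]
  refine le_sSup_spectrum_of_smul_le_mulVec (isHermitian_signlessLaplacian G) hy0 hy fun u ↦ ?_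
  rw [signlessLaplacian_mulVec_apply, Pi.smul_apply, smul_eq_mul]
  rcases eq_or_ne u v with rfl | huv
  · have hsum : ∑ w ∈ G.neighborFinset u, y w = G.degree u := by
      rw [Finset.sum_congr rfl fun w hw ↦ hy_adj ((G.mem_neighborFinset u w).1 hw)]
      simp
    rw [hsum, hyv, add_one_mul]
  by_cases hadj : G.Adj v u
  · have hdeg : (1 : ℝ) ≤ G.degree u := by
      exact_mod_cast (G.degree_pos_iff_exists_adj u).2 ⟨v, hadj.symm⟩
    have hsum : y v ≤ ∑ w ∈ G.neighborFinset u, y w :=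
      Finset.single_le_sum (fun w _ ↦ hy w) ((G.mem_neighborFinset u v).2 hadj.symm)
    rw [hy_adj hadj]
    linarith
  · have hyu : y u = 0 := by simp [y, huv, hadj]
    simpa only [hyu, mul_zero, zero_add] using Finset.sum_nonneg fun w _ ↦ hy w

theorem eigenvector_pos_of_connected (hG : G.Connected) {q : ℝ} {x : V → ℝ}
    (hx0 : x ≠ 0) (hx : 0 ≤ x) (hq : signlessLaplacian G *ᵥ x = q • x) (v : V) : 0 < x v := by
  classical
  have hstep {u w : V} (hadj : G.Adj u w) (hu : x u = 0) : x w = 0 := by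
    have hrow := congrFun hq u
    rw [signlessLaplacian_mulVec_apply, Pi.smul_apply, hu, smul_zero, mul_zero, zero_add,
      Finset.sum_eq_zero_iff_of_nonneg fun w _ ↦ hx w] at hrow
    exact hrow w ((G.mem_neighborFinset u w).2 hadj)
  have hwalk {u w : V} (p : G.Walk u w) (hu : x u = 0) : x w = 0 := by
    induction p with
    | nil => exact hu
    | cons hadj _ ih => exact ih (hstep hadj hu)
  refine (hx v).lt_of_ne' fun hv ↦ hx0 (funext fun w ↦ ?_)
  obtain ⟨p⟩ := hG.preconnected v w
  exact hwalk p hv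

theorem exists_pos_signlessLaplacian_mulVec_eq_qIndex_smul (hG : G.Connected) :
    ∃ x : V → ℝ, (∀ v, 0 < x v) ∧ signlessLaplacian G *ᵥ x = qIndex G • x := by
  classical
  have := hG.nonempty
  obtain ⟨x, hx0, hx, hq⟩ := exists_nonneg_mulVec_eq_sSup_spectrum_smul
    (isHermitian_signlessLaplacian G) (signlessLaplacian_nonneg G)
  rw [← qIndex_eq_sSup_spectrum] at hq
  exact ⟨x, eigenvector_pos_of_connected hG hx0 hx hq, hq⟩

theorem eigenvector_le_of_insert_neighborSet_subset {x : V → ℝ} (hx : 0 ≤ x)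
    (hq : signlessLaplacian G *ᵥ x = qIndex G • x) {u k : V}
    (hsub : insert u (G.neighborSet u) ⊆ insert k (G.neighborSet k)) : x u ≤ x k := by
  classical
  obtain rfl | hku : u = k ∨ G.Adj k u := hsub (Set.mem_insert _ _)
  · rfl
  have hk_mem : k ∈ G.neighborFinset u := by simpa using hku.symm
  have hu_mem : u ∈ G.neighborFinset k := by simpa
  have herase : (G.neighborFinset u).erase k ⊆ (G.neighborFinset k).erase u := by
    intro w hw
    simp only [Finset.mem_erase, SimpleGraph.mem_neighborFinset] at hw ⊢
    exact ⟨hw.2.ne', (hsub (Set.mem_insert_of_mem u hw.2)).resolve_left hw.1⟩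
  have hdeg : (G.degree u : ℝ) ≤ G.degree k := by
    have h := Finset.card_le_card herase
    rw [Finset.card_erase_of_mem hk_mem, Finset.card_erase_of_mem hu_mem] at h
    have hpos := Finset.card_pos.2 ⟨u, hu_mem⟩
    simp only [← SimpleGraph.card_neighborFinset_eq_degree]
    exact_mod_cast (by omega)
  have hsum : ∑ w ∈ G.neighborFinset u, x w - x k ≤ ∑ w ∈ G.neighborFinset k, x w - x u := by
    rw [← Finset.sum_erase_eq_sub hk_mem, ← Finset.sum_erase_eq_sub hu_mem]
    exact Finset.sum_le_sum_of_subset_of_nonneg herase fun w _ _ ↦ hx w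
  have hrow_u := congrFun hq u
  have hrow_k := congrFun hq k
  rw [signlessLaplacian_mulVec_apply, Pi.smul_apply, smul_eq_mul] at hrow_u hrow_k
  have hqk : G.degree k + 1 ≤ qIndex G :=
    degree_add_one_le_qIndex ((G.degree_pos_iff_exists_adj k).2 ⟨u, hku⟩)
  have hux : G.degree u * x u ≤ G.degree k * x u := mul_le_mul_of_nonneg_right hdeg (hx u)
  by_contra! hlt
  have hgap : (qIndex G - G.degree k + 1) * (x u - x k) ≤ 0 := by linarith
  exact hgap.not_gt (mul_pos (by linarith) (sub_pos.2 hlt))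

theorem sub_degree_mul_eigenvector_le [DecidableRel G.Adj] {q M : ℝ} {x : V → ℝ}
    (hq : signlessLaplacian G *ᵥ x = q • x) {a o b : V} (hao : G.Adj a o) (hab : G.Adj a b)
    (hob : o ≠ b) (hM : ∀ w, G.Adj a w → w ≠ o → w ≠ b → x w ≤ M) :
    (q - G.degree a) * x a ≤ x o + x b + (G.degree a - 2) * M := by
  classical
  have hpair : {o, b} ⊆ G.neighborFinset a := by simp [Finset.insert_subset_iff, hao, hab]
  have hcard : ((G.neighborFinset a \ {o, b}).card : ℝ) = G.degree a - 2 := by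
    rw [Finset.cast_card_sdiff hpair, Finset.card_pair hob,
      SimpleGraph.card_neighborFinset_eq_degree, Nat.cast_two]
  have hrest : ∑ w ∈ G.neighborFinset a \ {o, b}, x w ≤ (G.degree a - 2) * M := by
    rw [← hcard, ← nsmul_eq_mul]
    refine Finset.sum_le_card_nsmul _ _ _ fun w hw ↦ ?_
    simp only [Finset.mem_sdiff, SimpleGraph.mem_neighborFinset, Finset.mem_insert,
      Finset.mem_singleton, not_or] at hw
    exact hM w hw.1 hw.2.1 hw.2.2
  have hrow := congrFun hq a
  rw [signlessLaplacian_mulVec_apply, Pi.smul_apply, smul_eq_mul, ← Finset.sum_sdiff hpair,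
    Finset.sum_pair hob] at hrow
  linarith

end SignlessLaplacian

section EdgeSwitch

variable {V : Type*} {G : SimpleGraph V} {e f : Sym2 V}

/-- The graph obtained from `G` by deleting the edge `e` and adding the edge `f`; nothing is added
when `f` is a loop. -/
def edgeSwitch (G : SimpleGraph V) (e f : Sym2 V) : SimpleGraph V :=
  SimpleGraph.fromEdgeSet ((G.edgeSet \ {e}) ∪ {f})

theorem edgeSet_edgeSwitch (hf : ¬ f.IsDiag) :
    (edgeSwitch G e f).edgeSet = (G.edgeSet \ {e}) ∪ {f} := by
  rw [edgeSwitch, SimpleGraph.edgeSet_fromEdgeSet, sdiff_eq_left, Set.disjoint_left]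
  rintro _ (hG | rfl)
  · exact G.not_isDiag_of_mem_edgeSet hG.1
  · exact hf

variable [Fintype V] [DecidableEq V]

theorem dotProduct_signlessLaplacian_edgeSwitch_mulVec (he : e ∈ G.edgeSet) (hf : f ∉ G.edgeSet)
    (hfd : ¬ f.IsDiag) (x : V → ℝ) :
    x ⬝ᵥ (signlessLaplacian (edgeSwitch G e f) *ᵥ x) =
      x ⬝ᵥ (signlessLaplacian G *ᵥ x) - (∑ v ∈ e.toFinset, x v) ^ 2 +
        (∑ v ∈ f.toFinset, x v) ^ 2 := by
  classical
  have hedges : (edgeSwitch G e f).edgeFinset = insert f (G.edgeFinset.erase e) := by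
    ext e'
    rw [SimpleGraph.mem_edgeFinset, edgeSet_edgeSwitch hfd]
    simp [and_comm]
  have hf' : f ∉ G.edgeFinset.erase e := by simp [hf]
  rw [dotProduct_signlessLaplacian_mulVec, dotProduct_signlessLaplacian_mulVec, hedges,
    Finset.sum_insert hf', Finset.sum_erase_eq_sub (SimpleGraph.mem_edgeFinset.2 he), add_comm]

theorem qIndex_lt_qIndex_edgeSwitch (he : e ∈ G.edgeSet) (hf : f ∉ G.edgeSet) (hfd : ¬ f.IsDiag)
    {x : V → ℝ} (hq : signlessLaplacian G *ᵥ x = qIndex G • x)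
    (hlt : (∑ v ∈ e.toFinset, x v) ^ 2 < (∑ v ∈ f.toFinset, x v) ^ 2) :
    qIndex G < qIndex (edgeSwitch G e f) := by
  have hxx : 0 ≤ x ⬝ᵥ x := Finset.sum_nonneg fun i _ ↦ mul_self_nonneg (x i)
  refine lt_of_mul_lt_mul_right ?_ hxx
  calc qIndex G * (x ⬝ᵥ x) = x ⬝ᵥ (signlessLaplacian G *ᵥ x) := by
        rw [hq, dotProduct_smul, smul_eq_mul]
    _ < x ⬝ᵥ (signlessLaplacian (edgeSwitch G e f) *ᵥ x) := by
        rw [dotProduct_signlessLaplacian_edgeSwitch_mulVec he hf hfd]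
        linarith
    _ ≤ qIndex (edgeSwitch G e f) * (x ⬝ᵥ x) :=
        dotProduct_signlessLaplacian_mulVec_le_qIndex_mul x

end EdgeSwitch

section AlmostDominatingVertex

variable {V : Type*} {G : SimpleGraph V} {o k : V}

theorem connected_of_neighborSet_eq_compl_pair {a : V} (hk : G.neighborSet k = {o, k}ᶜ)
    (hoa : G.Adj o a) : G.Connected := by
  have hreach {u : V} (huo : u ≠ o) : G.Reachable k u := by
    rcases eq_or_ne u k with rfl | huk
    · rfl
    · have hku : u ∈ G.neighborSet k := by simp [hk, huo, huk]
      exact SimpleGraph.Adj.reachable hku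
  refine (SimpleGraph.connected_iff_exists_forall_reachable G).2 ⟨k, fun u ↦ ?_⟩
  rcases eq_or_ne u o with rfl | huo
  · exact (hreach hoa.ne').trans hoa.symm.reachable
  · exact hreach huo

variable [Fintype V]

theorem degree_eq_card_sub_two_of_neighborSet_eq [DecidableRel G.Adj] (hok : o ≠ k)
    (hk : G.neighborSet k = {o, k}ᶜ) : G.degree k = Fintype.card V - 2 := by
  classical
  have hfin : G.neighborFinset k = {o, k}ᶜ := by
    rw [← Finset.coe_inj, SimpleGraph.coe_neighborFinset, hk]
    simp only [Finset.coe_compl, Finset.coe_pair]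
  rw [← SimpleGraph.card_neighborFinset_eq_degree, hfin, Finset.card_compl, Finset.card_pair hok]

theorem eigenvector_le_of_neighborSet_eq_compl_pair (hk : G.neighborSet k = {o, k}ᶜ) {x : V → ℝ}
    (hx : 0 ≤ x) (hq : signlessLaplacian G *ᵥ x = qIndex G • x) {u : V} (huo : u ≠ o)
    (hou : ¬ G.Adj o u) : x u ≤ x k := by
  refine eigenvector_le_of_insert_neighborSet_subset hx hq fun w hw ↦ ?_
  have hwo : w ≠ o := by
    rintro rfl
    exact hw.elim huo.symm fun huw ↦ hou huw.symm
  simp [hk, hwo, em]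

theorem sub_four_mul_eigenvector_le_of_commonNeighbors_eq [DecidableRel G.Adj] {a b : V}
    (hk : G.neighborSet k = {o, k}ᶜ) (hoa : G.commonNeighbors o a = {b}) (hao : G.Adj a o)
    (hdeg : G.degree a ≤ 4) {x : V → ℝ} (hx : 0 ≤ x)
    (hq : signlessLaplacian G *ᵥ x = qIndex G • x) :
    (qIndex G - 4) * x a ≤ x o + x b + 2 * x k := by
  obtain ⟨hob, hab⟩ : b ∈ G.commonNeighbors o a := hoa ▸ rfl
  have hM (w : V) (haw : G.Adj a w) (hwo : w ≠ o) (hwb : w ≠ b) : x w ≤ x k := by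
    refine eigenvector_le_of_neighborSet_eq_compl_pair hk hx hq hwo fun how ↦ hwb ?_
    have hw : w ∈ G.commonNeighbors o a := ⟨how, haw⟩
    rwa [hoa] at hw
  have hrow := sub_degree_mul_eigenvector_le hq hao hab hob.ne hM
  have hdeg' : (0 : ℝ) ≤ 4 - G.degree a := sub_nonneg.2 (by exact_mod_cast hdeg)
  linarith [mul_nonneg hdeg' (hx a), mul_nonneg hdeg' (hx k)]

theorem stmt_4_general [DecidableRel G.Adj] {a b : V} (hcard : 10 ≤ Fintype.card V) (hok : o ≠ k)
    (hk : G.neighborSet k = {o, k}ᶜ) (hoa : G.commonNeighbors o a = {b})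
    (hob : G.commonNeighbors o b = {a}) (ha : G.degree a ≤ 4) (hb : G.degree b ≤ 4) :
    qIndex G < qIndex (edgeSwitch G s(a, b) s(o, k)) := by
  classical
  obtain ⟨hob_adj, hab⟩ : b ∈ G.commonNeighbors o a := hoa ▸ rfl
  obtain ⟨hoa_adj, -⟩ : a ∈ G.commonNeighbors o b := hob ▸ rfl
  have hnadj : ¬ G.Adj o k := fun h ↦ by
    have ho : o ∈ G.neighborSet k := h.symm
    simp [hk] at ho
  have hq9 : 9 ≤ qIndex G := by
    have hdeg : 8 ≤ G.degree k := by rw [degree_eq_card_sub_two_of_neighborSet_eq hok hk]; omega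
    have hdeg' : (8 : ℝ) ≤ G.degree k := by exact_mod_cast hdeg
    linarith [degree_add_one_le_qIndex (G := G) (v := k) (by omega)]
  obtain ⟨x, hx, hq⟩ := exists_pos_signlessLaplacian_mulVec_eq_qIndex_smul
    (connected_of_neighborSet_eq_compl_pair hk hoa_adj)
  have hx0 : 0 ≤ x := fun v ↦ (hx v).le
  have hrow_a := sub_four_mul_eigenvector_le_of_commonNeighbors_eq hk hoa hoa_adj.symm ha hx0 hq
  have hrow_b := sub_four_mul_eigenvector_le_of_commonNeighbors_eq hk hob hob_adj.symm hb hx0 hq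
  have hab_lt : x a + x b < x o + x k := by
    have hprod : 0 ≤ (qIndex G - 9) * (x a + x b) :=
      mul_nonneg (by linarith) (add_nonneg (hx0 a) (hx0 b))
    linarith [hx o]
  refine qIndex_lt_qIndex_edgeSwitch hab hnadj (Sym2.mk_isDiag_iff.not.2 hok) hq ?_
  rw [Sym2.toFinset_mk_eq, Sym2.toFinset_mk_eq, Finset.sum_pair hab.ne, Finset.sum_pair hok]
  exact pow_lt_pow_left₀ hab_lt (add_nonneg (hx0 a) (hx0 b)) two_ne_zero

end AlmostDominatingVertex

/-- for the maximal outer-planar graph with `Δ = n - 2`, if `n ≥ 10` then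
deleting the edge `v_1 v_{n-1}` and adding the edge `v_0 v_k` increases the `Q`-index. -/
theorem stmt_4 (n k : ℕ) (hn : 6 ≤ n) (hk1 : 3 ≤ k) (hk2 : k ≤ n - 3)
    (G : SimpleGraph (Fin n))
    (h0 : G.neighborSet ⟨0, by omega⟩ = {⟨1, by omega⟩, ⟨n - 1, by omega⟩})
    (hk' : G.neighborSet ⟨k, by omega⟩ =
      {u : Fin n | u ≠ ⟨0, by omega⟩ ∧ u ≠ ⟨k, by omega⟩})
    (h1 : G.neighborSet ⟨1, by omega⟩ =
      {⟨0, by omega⟩, ⟨2, by omega⟩, ⟨k, by omega⟩, ⟨n - 1, by omega⟩})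
    (hlast : G.neighborSet ⟨n - 1, by omega⟩ =
      {⟨0, by omega⟩, ⟨1, by omega⟩, ⟨k, by omega⟩, ⟨n - 2, by omega⟩})
    (hn10 : 10 ≤ n) :
    qIndex G <
      qIndex (SimpleGraph.fromEdgeSet
        ((G.edgeSet \ {s((⟨1, by omega⟩ : Fin n), (⟨n - 1, by omega⟩ : Fin n))}) ∪
          {s((⟨0, by omega⟩ : Fin n), (⟨k, by omega⟩ : Fin n))})) := by
  classical
  refine stmt_4_general (by simpa using hn10) ?_ (hk'.trans ?_) ?_ ?_ ?_ ?_
  · simp only [ne_eq, Fin.mk.injEq]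
    omega
  · ext u
    simp
  · ext u
    simp only [SimpleGraph.commonNeighbors_eq, h0, h1, Set.mem_inter_iff, Set.mem_insert_iff,
      Set.mem_singleton_iff, Fin.ext_iff]
    omega
  · ext u
    simp only [SimpleGraph.commonNeighbors_eq, h0, hlast, Set.mem_inter_iff, Set.mem_insert_iff,
      Set.mem_singleton_iff, Fin.ext_iff]
    omega
  · simpa [← SimpleGraph.card_neighborFinset_eq_degree, SimpleGraph.neighborFinset, h1] using
      Finset.card_le_four
  · simpa [← SimpleGraph.card_neighborFinset_eq_degree, SimpleGraph.neighborFinset, hlast] using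
      Finset.card_le_four
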